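/- Let d ≥ 1 and define K̂ : ℝ^d → ℝ by K̂(u) = max(0, 1 − ‖u‖), where ‖·‖ is the Euclidean norm. Then for every ω ∈ ℝ^d: (1 − K̂(ω))² + ∑_{x ∈ ℤ^d, x ≠ 0} K̂(ω + x)² ≤ 2 ‖ω‖². -/

import Mathlib

/-! The heart of the matter is `∑ x ≠ 0, K̂(ω + x)² ≤ ‖ω‖²` for `‖ω‖ ≤ 1`. A translate `ω + x` in
the open unit ball has `x i = - sign (ω i)` for every `i` in the support `A` of `x`, so `A`
determines `x`. Moreover `K̂(ω + x)²` is at most `|A|` times the probability that a random subset of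
the coordinates, containing each `i` independently with probability `ω i ^ 2`, equals `A`: since
`√|A| ≤ ‖ω‖ + ‖ω + x‖ < 2`, only `|A| ≤ 3` has to be examined. Summing over `A` gives the expected
cardinality of the random subset, which is `∑ i, ω i ^ 2 = ‖ω‖²`.

When `‖ω‖ ≥ 1`, recentring at a translate `p` of `ω` in the open unit ball bounds the whole sum by
`(1 - ‖p‖)² + ‖p‖² ≤ 1`. -/

open Finset WithLp
open SignType (sign)

section BernoulliWeight

variable {ι R : Type*} [Fintype ι] [DecidableEq ι] [CommRing R]

/-- The probability that a random subset of `ι`, which contains each `i` independently with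
probability `b i`, equals `A`. It is defined for arbitrary `b`, as a polynomial expression. -/
def bernoulliWeight (b : ι → R) (A : Finset ι) : R :=
  (∏ i ∈ A, b i) * ∏ i ∈ Aᶜ, (1 - b i)

lemma sum_bernoulliWeight_filter_mem (b : ι → R) (i : ι) :
    ∑ A with i ∈ A, bernoulliWeight b A = b i := by
  -- Replacing the factor `1 - b i` by `0` kills exactly the terms with `i ∉ A`.
  let c := Function.update (fun j ↦ 1 - b j) i 0
  have hc : ∀ j, j ≠ i → b j + c j = 1 := fun j hj ↦ by simp [c, hj]
  calc ∑ A with i ∈ A, bernoulliWeight b A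
      = ∑ A : Finset ι, (∏ j ∈ A, b j) * ∏ j ∈ Aᶜ, c j := by
        rw [sum_filter]
        refine sum_congr rfl fun A _ ↦ ?_
        split_ifs with hi
        · refine congrArg _ (prod_congr rfl fun j hj ↦ ?_)
          have hji : j ≠ i := by rintro rfl; exact mem_compl.1 hj hi
          simp [c, hji]
        · rw [prod_eq_zero (mem_compl.2 hi) (by simp [c]), mul_zero]
    _ = ∏ j, (b j + c j) := (Fintype.prod_add b c).symm
    _ = b i := by rw [Fintype.prod_eq_single i hc]; simp [c]

lemma sum_card_mul_bernoulliWeight (b : ι → R) :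
    ∑ A : Finset ι, (#A : R) * bernoulliWeight b A = ∑ i, b i := by
  calc ∑ A : Finset ι, (#A : R) * bernoulliWeight b A
      = ∑ A : Finset ι, ∑ i, if i ∈ A then bernoulliWeight b A else 0 := by simp
    _ = ∑ i, ∑ A with i ∈ A, bernoulliWeight b A := by rw [sum_comm]; simp only [sum_filter]
    _ = ∑ i, b i := by simp only [sum_bernoulliWeight_filter_mem]

lemma bernoulliWeight_nonneg [LinearOrder R] [IsStrictOrderedRing R] {b : ι → R}
    (h0 : ∀ i, 0 ≤ b i) (h1 : ∀ i, b i ≤ 1) (A : Finset ι) : 0 ≤ bernoulliWeight b A :=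
  mul_nonneg (prod_nonneg fun i _ ↦ h0 i) (prod_nonneg fun i _ ↦ sub_nonneg.2 (h1 i))

end BernoulliWeight

section OrderedRing

variable {ι R : Type*} [CommRing R] [LinearOrder R] [IsStrictOrderedRing R]

lemma one_sub_sum_le_prod_one_sub {b : ι → R} {s : Finset ι}
    (h0 : ∀ i ∈ s, 0 ≤ b i) (h1 : ∀ i ∈ s, b i ≤ 1) :
    1 - ∑ i ∈ s, b i ≤ ∏ i ∈ s, (1 - b i) := by
  induction s using Finset.cons_induction with
  | empty => simp
  | cons a s ha ih =>
    simp only [mem_cons, forall_eq_or_imp] at h0 h1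
    rw [sum_cons, prod_cons]
    have hs : 0 ≤ ∑ i ∈ s, b i := sum_nonneg h0.2
    calc 1 - (b a + ∑ i ∈ s, b i)
        ≤ (1 - b a) * (1 - ∑ i ∈ s, b i) := by linarith [mul_nonneg h0.1 hs]
      _ ≤ (1 - b a) * ∏ i ∈ s, (1 - b i) :=
        mul_le_mul_of_nonneg_left (ih h0.2 h1.2) (sub_nonneg.2 h1.1)

lemma one_sub_sq_le_mul_sq {c p q : R} (hp : p ^ 2 ≤ 1) (hc : 0 < c) (hcp : c ≤ (1 + p) ^ 2)
    (h : 1 - p ^ 2 ≤ c * q) : (1 - p) ^ 2 ≤ c * q ^ 2 := by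
  refine le_of_mul_le_mul_left ?_ hc
  calc c * (1 - p) ^ 2 ≤ (1 + p) ^ 2 * (1 - p) ^ 2 := by gcongr
    _ = (1 - p ^ 2) ^ 2 := by ring
    _ ≤ (c * q) ^ 2 := pow_le_pow_left₀ (sub_nonneg.2 hp) h 2
    _ = c * (c * q ^ 2) := by ring

lemma one_sub_sq_le_one_sub_sq_mul {p s : R} (hps : p ≤ s) (hs : s ≤ 1) :
    (1 - s) ^ 2 ≤ (1 - p) ^ 2 * (1 - (s ^ 2 - p ^ 2)) := by
  have h : (1 - p) ^ 2 * (s + p) ≤ 2 - s - p := by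
    have hp1 : 0 ≤ 1 - p := by linarith
    calc (1 - p) ^ 2 * (s + p) ≤ (1 - p) ^ 2 * (1 + p) := by gcongr
      _ = (1 - p) * (1 - p ^ 2) := by ring
      _ ≤ 1 - p := mul_le_of_le_one_right hp1 (by linarith [sq_nonneg p])
      _ ≤ 2 - s - p := by linarith
  linarith [mul_le_mul_of_nonneg_left h (sub_nonneg.2 hps)]

lemma intCast_eq_neg_sign_of_abs_add_lt_one {w : R} {n : ℤ} (hw : |w| ≤ 1) (hn : n ≠ 0)
    (h : |w + n| < 1) : n = -(sign w : ℤ) := by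
  rw [abs_le] at hw
  rw [abs_lt] at h
  have hn2 : n < 2 := by exact_mod_cast (by linarith : (n : R) < 2)
  have hn2' : -2 < n := by exact_mod_cast (by linarith : (-2 : R) < n)
  obtain rfl | rfl : n = 1 ∨ n = -1 := by omega
  · rw [sign_neg (by push_cast at h; linarith)]; rfl
  · rw [sign_pos (by push_cast at h; linarith)]; rfl

lemma abs_sub_sign {w : R} (hw0 : w ≠ 0) (hw : |w| ≤ 1) : |w - (sign w : ℤ)| = 1 - |w| := by
  rcases hw0.lt_or_gt with h | h
  · rw [abs_of_neg h] at hw ⊢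
    have hcast : ((sign w : ℤ) : R) = -1 := by simp [sign_neg h]
    rw [hcast, abs_of_nonneg (by linarith)]
    ring
  · rw [abs_of_pos h] at hw ⊢
    have hcast : ((sign w : ℤ) : R) = 1 := by simp [sign_pos h]
    rw [hcast, abs_of_nonpos (by linarith)]
    ring

end OrderedRing

section RealInequalities

lemma one_sub_sum_one_sub_sq_le_three_mul {t u v : ℝ} (ht : 0 ≤ t) (hu : 0 ≤ u) (hv : 0 ≤ v) :
    1 - ((1 - t) ^ 2 + (1 - u) ^ 2 + (1 - v) ^ 2) ≤ 3 * (t * u * v) := by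
  suffices 0 ≤ (t + u - 1) ^ 2 + (1 - v) ^ 2 + (3 * v - 2) * (t * u) by linarith
  rcases le_total (2 / 3) v with hv' | hv'
  · have : 0 ≤ 3 * v - 2 := by linarith
    positivity
  · have hq : 0 ≤ 3 * v ^ 2 - 4 * v + 2 := by nlinarith [sq_nonneg (3 * v - 2)]
    have hd : 0 ≤ (2 - 3 * v) * (t - u) ^ 2 := mul_nonneg (by linarith) (sq_nonneg _)
    -- Since `4 t u = (t + u)² - (t - u)²`, this factor completes the square in `t + u`.
    refine nonneg_of_mul_nonneg_right (a := 2 + 3 * v) ?_ (by positivity)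
    calc (0 : ℝ) ≤ ((2 + 3 * v) * (t + u) / 2 - 2) ^ 2 + v * (3 * v ^ 2 - 4 * v + 2)
          + (2 + 3 * v) * ((2 - 3 * v) * (t - u) ^ 2) / 4 := by positivity
      _ = _ := by ring

variable {ι : Type*} {t : ι → ℝ} {A : Finset ι}

lemma card_le_one_add_sqrt_sum_sq (ht : ∑ i ∈ A, t i ^ 2 ≤ 1) :
    (#A : ℝ) ≤ (1 + √(∑ i ∈ A, (1 - t i) ^ 2)) ^ 2 := by
  set a := ∑ i ∈ A, (1 - t i) ^ 2
  have ha : √a ^ 2 = a := Real.sq_sqrt (by positivity)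
  have hcs : ∑ i ∈ A, t i * (1 - t i) ≤ √a := calc
    _ ≤ √(∑ i ∈ A, t i ^ 2) * √a := Real.sum_mul_le_sqrt_mul_sqrt A t fun i ↦ 1 - t i
    _ ≤ √a := mul_le_of_le_one_left (Real.sqrt_nonneg a) (Real.sqrt_le_one.2 ht)
  calc (#A : ℝ) = ∑ i ∈ A, (t i ^ 2 + 2 * (t i * (1 - t i)) + (1 - t i) ^ 2) := by
        rw [sum_congr rfl fun i _ ↦ (by ring : _ = (1 : ℝ))]; simp
    _ = ∑ i ∈ A, t i ^ 2 + 2 * ∑ i ∈ A, t i * (1 - t i) + a := by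
        rw [sum_add_distrib, sum_add_distrib, mul_sum]
    _ ≤ 1 + 2 * √a + √a ^ 2 := by linarith
    _ = (1 + √a) ^ 2 := by ring

lemma one_sub_sqrt_sum_sq_le_card_mul_prod (hA : A.Nonempty) (ht : ∑ i ∈ A, t i ^ 2 ≤ 1)
    (ha : ∑ i ∈ A, (1 - t i) ^ 2 < 1) :
    (1 - √(∑ i ∈ A, (1 - t i) ^ 2)) ^ 2 ≤ #A * ∏ i ∈ A, t i ^ 2 := by
  set a := ∑ i ∈ A, (1 - t i) ^ 2 with ha_def
  have hsq : √a ^ 2 = a := Real.sq_sqrt (by positivity)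
  have hle : (#A : ℝ) ≤ (1 + √a) ^ 2 := card_le_one_add_sqrt_sum_sq ht
  have hcard : #A < 4 := by
    have : (#A : ℝ) < 4 := by nlinarith [Real.sqrt_nonneg a]
    exact_mod_cast this
  have hcard0 : 0 < #A := hA.card_pos
  have of_prod (h : 1 - a ≤ #A * ∏ i ∈ A, t i) : (1 - √a) ^ 2 ≤ #A * (∏ i ∈ A, t i) ^ 2 :=
    one_sub_sq_le_mul_sq (hsq.trans_le ha.le) (by exact_mod_cast hcard0) hle (by rwa [hsq])
  rw [prod_pow]
  classical
  obtain h | h | h : #A = 1 ∨ #A = 2 ∨ #A = 3 := by omega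
  · obtain ⟨i, rfl⟩ := card_eq_one.1 h
    simpa [ha_def, Real.sqrt_sq_eq_abs] using sq_le_sq.2 (abs_abs_sub_abs_le 1 (1 - t i))
  · refine of_prod ?_
    obtain ⟨i, j, hij, rfl⟩ := card_eq_two.1 h
    rw [ha_def, h, sum_pair hij, prod_pair hij]
    push_cast
    linarith [sq_nonneg (t i + t j - 1)]
  · refine of_prod ?_
    have hpos : ∀ i ∈ A, 0 ≤ t i := fun i hi ↦ by
      have := single_le_sum (f := fun i ↦ (1 - t i) ^ 2) (fun i _ ↦ sq_nonneg _) hi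
      nlinarith
    obtain ⟨i, j, k, hij, hik, hjk, rfl⟩ := card_eq_three.1 h
    have hi : i ∉ ({j, k} : Finset ι) := by simp [hij, hik]
    rw [ha_def, h, sum_insert hi, prod_insert hi, sum_pair hjk, prod_pair hjk, ← add_assoc,
      ← mul_assoc (t i)]
    exact_mod_cast one_sub_sum_one_sub_sq_le_three_mul (hpos i (by simp)) (hpos j (by simp))
      (hpos k (by simp))

end RealInequalities

section Lattice

variable {ι : Type*}

/-- The point of `ℤ^ι ⊆ ℝ^ι` with coordinates `x`, as an element of Euclidean space. -/
def latticePoint (x : ι → ℤ) : EuclideanSpace ℝ ι := toLp 2 fun i ↦ (x i : ℝ)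

@[simp] lemma latticePoint_apply (x : ι → ℤ) (i : ι) : latticePoint x i = x i := rfl

variable [Fintype ι] {w : EuclideanSpace ℝ ι} {x : ι → ℤ}

/-- The set of nonzero coordinates of a lattice point, as a `Finset`. -/
def latticeSupport (x : ι → ℤ) : Finset ι := {i | x i ≠ 0}

@[simp] lemma mem_latticeSupport {i : ι} : i ∈ latticeSupport x ↔ x i ≠ 0 := by
  simp [latticeSupport]

lemma latticeSupport_nonempty : (latticeSupport x).Nonempty ↔ x ≠ 0 := by
  simp [Finset.Nonempty, Function.ne_iff]

lemma sq_apply_le_one_of_norm_le_one (hw : ‖w‖ ≤ 1) (i : ι) : w i ^ 2 ≤ 1 :=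
  (sq_le_one_iff_abs_le_one _).2 ((PiLp.norm_apply_le w i).trans hw)

lemma apply_eq_neg_sign_of_norm_add_latticePoint_lt_one (hw : ‖w‖ ≤ 1)
    (hx : ‖w + latticePoint x‖ < 1) {i : ι} (hi : x i ≠ 0) : x i = -(sign (w i) : ℤ) :=
  intCast_eq_neg_sign_of_abs_add_lt_one ((PiLp.norm_apply_le w i).trans hw) hi
    ((PiLp.norm_apply_le (w + latticePoint x) i).trans_lt hx)

lemma injOn_latticeSupport (hw : ‖w‖ ≤ 1) :
    Set.InjOn latticeSupport {x : ι → ℤ | ‖w + latticePoint x‖ < 1} := by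
  intro x hx y hy hxy
  ext i
  have hiff : x i ≠ 0 ↔ y i ≠ 0 := by
    rw [← mem_latticeSupport, hxy, mem_latticeSupport]
  by_cases hi : x i = 0
  · rw [hi, not_not.1 fun h ↦ hiff.2 h hi]
  · rw [apply_eq_neg_sign_of_norm_add_latticePoint_lt_one hw hx hi,
      apply_eq_neg_sign_of_norm_add_latticePoint_lt_one hw hy (hiff.1 hi)]

lemma norm_add_latticePoint_sq [DecidableEq ι] (hw : ‖w‖ ≤ 1) (hx : ‖w + latticePoint x‖ < 1) :
    ‖w + latticePoint x‖ ^ 2 =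
      ∑ i ∈ latticeSupport x, (1 - |w i|) ^ 2 + ∑ i ∈ (latticeSupport x)ᶜ, w i ^ 2 := by
  rw [EuclideanSpace.real_norm_sq_eq, ← sum_add_sum_compl (latticeSupport x)]
  refine congrArg₂ (· + ·) (sum_congr rfl fun i hi ↦ ?_) (sum_congr rfl fun i hi ↦ ?_)
  · rw [mem_latticeSupport] at hi
    have hxi := apply_eq_neg_sign_of_norm_add_latticePoint_lt_one hw hx hi
    have hwi : w i ≠ 0 := fun h ↦ hi (by simp [hxi, h])
    rw [← abs_sub_sign hwi ((PiLp.norm_apply_le w i).trans hw), sq_abs]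
    simp [hxi, sub_eq_add_neg]
  · simp only [mem_compl, mem_latticeSupport, not_not] at hi
    simp [hi]

lemma one_sub_norm_add_latticePoint_sq_le [DecidableEq ι] (hw : ‖w‖ ≤ 1) (hx0 : x ≠ 0)
    (hx : ‖w + latticePoint x‖ < 1) :
    (1 - ‖w + latticePoint x‖) ^ 2 ≤
      #(latticeSupport x) * bernoulliWeight (fun i ↦ w i ^ 2) (latticeSupport x) := by
  set A := latticeSupport x
  set s := ‖w + latticePoint x‖
  set a := ∑ i ∈ A, (1 - |w i|) ^ 2
  have ha0 : 0 ≤ a := by positivity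
  have hs2 : s ^ 2 = a + ∑ i ∈ Aᶜ, w i ^ 2 := norm_add_latticePoint_sq hw hx
  have hs1 : s ^ 2 < 1 := pow_lt_one₀ (norm_nonneg _) hx two_ne_zero
  have has : a ≤ s ^ 2 := hs2 ▸ le_add_of_nonneg_right (by positivity)
  have hwA : ∑ i ∈ A, |w i| ^ 2 ≤ 1 := calc
    _ ≤ ∑ i, |w i| ^ 2 := sum_le_univ_sum_of_nonneg fun i ↦ sq_nonneg _
    _ = ‖w‖ ^ 2 := by simp [EuclideanSpace.real_norm_sq_eq]
    _ ≤ 1 := pow_le_one₀ (norm_nonneg w) hw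
  have hin : (1 - √a) ^ 2 ≤ #A * ∏ i ∈ A, w i ^ 2 := by
    simpa using one_sub_sqrt_sum_sq_le_card_mul_prod (latticeSupport_nonempty.2 hx0) hwA
      (has.trans_lt hs1)
  have hout : 1 - (s ^ 2 - a) ≤ ∏ i ∈ Aᶜ, (1 - w i ^ 2) := by
    rw [hs2, add_sub_cancel_left]
    exact one_sub_sum_le_prod_one_sub (fun i _ ↦ sq_nonneg _) fun i _ ↦
      sq_apply_le_one_of_norm_le_one hw i
  calc (1 - s) ^ 2 ≤ (1 - √a) ^ 2 * (1 - (s ^ 2 - √a ^ 2)) :=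
        one_sub_sq_le_one_sub_sq_mul ((Real.sqrt_le_left (norm_nonneg _)).2 has) hx.le
    _ = (1 - √a) ^ 2 * (1 - (s ^ 2 - a)) := by rw [Real.sq_sqrt ha0]
    _ ≤ (#A * ∏ i ∈ A, w i ^ 2) * ∏ i ∈ Aᶜ, (1 - w i ^ 2) := by
        gcongr
        linarith
    _ = #A * bernoulliWeight (fun i ↦ w i ^ 2) A := mul_assoc ..

end Lattice

section ConeKernel

/-- The kernel `K̂(u) = max(0, 1 - ‖u‖)`. -/
noncomputable def coneKernel {E : Type*} [Norm E] (u : E) : ℝ := max 0 (1 - ‖u‖)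

lemma coneKernel_eq_one_sub_norm {E : Type*} [Norm E] {u : E} (hu : ‖u‖ ≤ 1) :
    coneKernel u = 1 - ‖u‖ := max_eq_right (sub_nonneg.2 hu)

lemma coneKernel_eq_zero {E : Type*} [Norm E] {u : E} (hu : 1 ≤ ‖u‖) : coneKernel u = 0 :=
  max_eq_left (sub_nonpos.2 hu)

variable {ι : Type*} [Fintype ι] {w : EuclideanSpace ℝ ι}

lemma sum_coneKernel_add_latticePoint_sq_le_norm_sq (hw : ‖w‖ ≤ 1) {s : Finset (ι → ℤ)}
    (hs : 0 ∉ s) : ∑ x ∈ s, coneKernel (w + latticePoint x) ^ 2 ≤ ‖w‖ ^ 2 := by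
  classical
  let b : ι → ℝ := fun i ↦ w i ^ 2
  let G : Finset ι → ℝ := fun A ↦ #A * bernoulliWeight b A
  have hG : ∀ A, 0 ≤ G A := fun A ↦
    mul_nonneg A.card.cast_nonneg
      (bernoulliWeight_nonneg (fun i ↦ sq_nonneg _) (sq_apply_le_one_of_norm_le_one hw) A)
  let s' := {x ∈ s | ‖w + latticePoint x‖ < 1}
  have hinj : Set.InjOn latticeSupport (s' : Set (ι → ℤ)) :=
    (injOn_latticeSupport hw).mono fun x hx ↦ (mem_filter.1 hx).2
  calc ∑ x ∈ s, coneKernel (w + latticePoint x) ^ 2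
      = ∑ x ∈ s', coneKernel (w + latticePoint x) ^ 2 :=
        (sum_filter_of_ne fun x _ hx ↦
          lt_of_not_ge fun h ↦ hx (by simp [coneKernel_eq_zero h])).symm
    _ ≤ ∑ x ∈ s', G (latticeSupport x) := by
        refine sum_le_sum fun x hx ↦ ?_
        obtain ⟨hxs, hx1⟩ := mem_filter.1 hx
        rw [coneKernel_eq_one_sub_norm hx1.le]
        exact one_sub_norm_add_latticePoint_sq_le hw (ne_of_mem_of_not_mem hxs hs) hx1
    _ = ∑ A ∈ s'.image latticeSupport, G A := (sum_image hinj).symm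
    _ ≤ ∑ A, G A := sum_le_univ_sum_of_nonneg hG
    _ = ‖w‖ ^ 2 := by rw [sum_card_mul_bernoulliWeight, EuclideanSpace.real_norm_sq_eq]

lemma sum_coneKernel_add_latticePoint_sq_le_one (w : EuclideanSpace ℝ ι) (s : Finset (ι → ℤ)) :
    ∑ x ∈ s, coneKernel (w + latticePoint x) ^ 2 ≤ 1 := by
  classical
  by_cases h : ∃ y ∈ s, ‖w + latticePoint y‖ < 1
  · obtain ⟨y, hys, hy⟩ := h
    set p := w + latticePoint y with hp
    have htrans : ∀ x, w + latticePoint x = p + latticePoint (x - y) := fun x ↦ by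
      ext i; simp [hp]
    have hrest : ∑ x ∈ s.erase y, coneKernel (w + latticePoint x) ^ 2 ≤ ‖p‖ ^ 2 := by
      have := sum_coneKernel_add_latticePoint_sq_le_norm_sq hy.le
        (s := (s.erase y).image (· - y)) (by simp [sub_eq_zero])
      rw [sum_image sub_left_injective.injOn] at this
      simpa only [htrans] using this
    calc ∑ x ∈ s, coneKernel (w + latticePoint x) ^ 2
        = coneKernel p ^ 2 + ∑ x ∈ s.erase y, coneKernel (w + latticePoint x) ^ 2 :=
          (add_sum_erase s _ hys).symm
      _ ≤ (1 - ‖p‖) ^ 2 + ‖p‖ ^ 2 := by rw [coneKernel_eq_one_sub_norm hy.le]; gcongr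
      _ ≤ 1 := by nlinarith [norm_nonneg p]
  · push Not at h
    rw [sum_eq_zero fun x hx ↦ by rw [coneKernel_eq_zero (h x hx), zero_pow two_ne_zero]]
    exact zero_le_one

lemma tsum_coneKernel_add_latticePoint_sq_le {c : ℝ}
    (h : ∀ s : Finset (ι → ℤ), 0 ∉ s → ∑ x ∈ s, coneKernel (w + latticePoint x) ^ 2 ≤ c) :
    ∑' x : {x : ι → ℤ // x ≠ 0}, coneKernel (w + latticePoint x.1) ^ 2 ≤ c :=
  Real.tsum_le_of_sum_le (fun _ ↦ sq_nonneg _) fun s ↦ by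
    simpa using h (s.map (.subtype _)) (by simp)

end ConeKernel

/-- The key pointwise bound in the proof of Theorem 2: for the kernel
`K̂(u) = max(0, 1 − ‖u‖)` (Euclidean norm, written as `√(∑ uᵢ²)`) it holds for
every `ω ∈ ℝ^d` that
`(1 − K̂(ω))² + ∑_{x ∈ ℤ^d, x ≠ 0} K̂(ω + x)² ≤ 2‖ω‖²`. -/
theorem kernel_pointwise_bound (d : ℕ) (hd : 1 ≤ d)
    (K : (Fin d → ℝ) → ℝ)
    (hK : ∀ u : Fin d → ℝ, K u = max 0 (1 - Real.sqrt (∑ i, (u i) ^ 2))) :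
    ∀ ω : Fin d → ℝ,
      (1 - K ω) ^ 2 +
          (∑' x : {x : Fin d → ℤ // x ≠ 0}, (K (ω + fun i => ((x.1 i : ℝ)))) ^ 2)
        ≤ 2 * ∑ i, (ω i) ^ 2 := by
  intro ω
  obtain rfl : K = fun u ↦ coneKernel (toLp 2 u) := by
    ext u; simp [hK, coneKernel, EuclideanSpace.norm_eq]
  set w : EuclideanSpace ℝ (Fin d) := toLp 2 ω
  have hnorm : ∑ i, ω i ^ 2 = ‖w‖ ^ 2 := (EuclideanSpace.real_norm_sq_eq w).symm
  change (1 - coneKernel w) ^ 2 +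
    ∑' x : {x : Fin d → ℤ // x ≠ 0}, coneKernel (w + latticePoint x.1) ^ 2 ≤ _
  rw [hnorm]
  rcases le_total ‖w‖ 1 with hw | hw
  · have htsum := tsum_coneKernel_add_latticePoint_sq_le fun s hs ↦
      sum_coneKernel_add_latticePoint_sq_le_norm_sq hw (s := s) hs
    rw [coneKernel_eq_one_sub_norm hw]
    linarith
  · have htsum := tsum_coneKernel_add_latticePoint_sq_le fun s _ ↦
      sum_coneKernel_add_latticePoint_sq_le_one w s
    rw [coneKernel_eq_zero hw]
    nlinarith
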